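/- Under the Tanner graph setup, if the girth g of G satisfies g ≥ 8, then the number of 14-cycles satisfies N_14 = −6(q1+q2)·N_12 − 5·(3(q1+q2)² + q1·q2)·N_10 − 4(q1+q2)·(5(q1+q2)² + 6·q1·q2)·N_8 + (T_7 − |E|·A_14)/14, with A_14 as defined in the context. -/

import Mathlib

/-!
The formula compares two traces. Since the adjacency matrix `A` of the Tanner graph has diagonal
blocks zero and off-diagonal blocks `H`, `Hᵀ`, the trace of `A ^ 14` is twice `T_7`. On the other
side stands the Hashimoto matrix `B` on darts, with `tr (B ^ l)` the number of cyclically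
non-backtracking closed walks of length `l`. If `l` is less than twice the girth, these walks are
exactly the rooted oriented cycles (`trace_hashimoto_pow_eq_cycleCount`), because a repeated vertex
would split such a walk into two closed non-backtracking walks, each at least as long as the girth
(`isCycle_of_chain`). Girth at least `8` covers all `l ≤ 14`, and gives zero for `l ≤ 6`.

To relate the two, write `B = Tᵀ S - J` with `S`, `T` the source and target incidence matrices and
`J` the dart reversal. Then `W_r = S B ^ r Tᵀ` counts non-backtracking walks with `r + 1` edges, and
with `Q` the diagonal matrix of degrees minus one,
`W_(r+2) = W_(r+1) A - W_r Q` (`nbWalkMat_succ_succ`) and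
`tr B ^ (r+3) = tr W_(r+2) - tr (W_r Q) + tr B ^ (r+1)` (`trace_hashimoto_pow_rec`).

Biregularity gives `Q A = A (s - Q)` and `Q² = s Q - c` with `s = q1 + q2` and `c = q1 q2`, hence
`W_(r+4) = W_(r+2) A² - s W_(r+2) - c W_r` (`nbWalkMat_even_rec`). Multiplying by powers of `A²`, and
possibly by `Q`, and taking traces gives a linear system in real numbers, from which
`tr A ^ 4, …, tr A ^ 14` are found successively in terms of the cycle counts and the number of edges
(`scalar_elimination`).
-/

open Matrix Finset

/-- The Tanner graph of a real matrix `H`: the simple bipartite graph on `α ⊕ β`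
in which check node `i` is adjacent to variable node `j` iff `H i j = 1`. -/
def tannerGraph {α β : Type*} (H : Matrix α β ℝ) : SimpleGraph (α ⊕ β) :=
  SimpleGraph.fromRel (fun u v => ∃ i j, u = Sum.inl i ∧ v = Sum.inr j ∧ H i j = 1)

/-- The number of pairs `(v, w)` where `w` is a closed walk of length `l` based at `v`
that is a cycle. -/
noncomputable def cycleCount {V : Type*} (G : SimpleGraph V) (l : ℕ) : ℕ :=
  Nat.card {p : Σ v : V, G.Walk v v // p.2.length = l ∧ p.2.IsCycle}

/-- `N_{2k}`: the number of cycles of length `2k` in `G`, as a real number. -/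
noncomputable def numCycles {V : Type*} (G : SimpleGraph V) (k : ℕ) : ℝ :=
  (cycleCount G (2 * k) : ℝ) / (4 * k)


/-! ### Non-backtracking closed walks shorter than twice the girth -/

section Walks
variable {V : Type*} {G : SimpleGraph V}

/-- The dart `e` may follow the dart `d` in a non-backtracking walk: it starts where `d` ends
and is not the reversal of `d`. -/
def NonBack (G : SimpleGraph V) (d e : G.Dart) : Prop := d.snd = e.fst ∧ e ≠ d.symm

/-- A non-backtracking walk that repeats a vertex contains a cycle: the first vertex of
its shortest suffix that is not a path recurs in that suffix, and the closed piece so obtained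
has length at least `3` because there is no backtracking. -/
lemma exists_isCycle_of_isChain {u v : V} (p : G.Walk u v)
    (hc : p.darts.IsChain (NonBack G)) (hp : ¬ p.IsPath) :
    ∃ (w : V) (c : G.Walk w w), c.IsCycle ∧ c.length ≤ p.length := by
  classical
  induction p with
  | nil => simp at hp
  | @cons u v w h q ih =>
    rw [SimpleGraph.Walk.darts_cons, List.isChain_cons] at hc
    by_cases hq : q.IsPath
    · have hu : u ∈ q.support := by
        by_contra hu
        exact hp ((SimpleGraph.Walk.cons_isPath_iff _ _).2 ⟨hq, hu⟩)
      refine ⟨u, (q.takeUntil u hu).cons h, ?_, ?_⟩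
      · rw [SimpleGraph.Walk.isCycle_iff_isPath_tail_and_le_length]
        refine ⟨by simpa using hq.takeUntil hu, ?_⟩
        by_contra hlen
        cases q with
        | nil => simp at hu; exact h.ne hu
        | @cons _ x _ h' r =>
          rw [SimpleGraph.Walk.takeUntil_cons (hwp := by
            rw [SimpleGraph.Walk.support_cons, List.mem_cons] at hu
            exact hu.resolve_left h.ne) (h := h.ne.symm)] at hlen
          simp only [SimpleGraph.Walk.length_cons] at hlen
          have h0 := SimpleGraph.Walk.eq_of_length_eq_zero (p := r.takeUntil u (by
            rw [SimpleGraph.Walk.support_cons, List.mem_cons] at hu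
            exact hu.resolve_left h.ne)) (by omega)
          subst h0
          have := hc.1 ⟨(v, x), h'⟩ (by simp)
          exact this.2 (by ext <;> simp)
      · simpa using SimpleGraph.Walk.length_takeUntil_le_length q hu
    · obtain ⟨w, c, h1, h2⟩ := ih hc.2 hq
      exact ⟨w, c, h1, by simp; omega⟩

lemma egirth_le_of_isChain {u : V} (p : G.Walk u u) (hc : p.darts.IsChain (NonBack G))
    (hp : ¬ p.Nil) : G.egirth ≤ p.length := by
  obtain ⟨w, c, h1, h2⟩ := exists_isCycle_of_isChain p hc
    (fun h => hp (by have h0 := SimpleGraph.Walk.isPath_iff_nil.1 h; simp [h0]))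
  exact (SimpleGraph.egirth_le_length h1).trans (by exact_mod_cast h2)

/-- The darts of a cycle form a cyclically non-backtracking sequence. -/
lemma chain_of_isCycle {u : V} (p : G.Walk u u) (hp : p.IsCycle) :
    Cycle.Chain (NonBack G) (p.darts : Cycle G.Dart) := by
  have hne : p.darts ≠ [] := by
    rw [Ne, SimpleGraph.Walk.darts_eq_nil]; exact hp.not_nil
  have hnd : (p.darts.map SimpleGraph.Dart.edge).Nodup := hp.edges_nodup
  rw [Cycle.chain_ne_nil _ hne, List.isChain_cons]
  have hlen := hp.three_le_length
  rw [← SimpleGraph.Walk.length_darts] at hlen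
  constructor
  · intro y hy
    rw [List.head?_eq_some_head hne, Option.mem_some_iff] at hy
    subst hy
    refine ⟨by simp, fun h => ?_⟩
    have h2 : (p.darts.head hne).edge = (p.darts.getLast hne).edge := by rw [h]; simp
    rw [List.head_eq_getElem, List.getLast_eq_getElem] at h2
    have := (hnd.getElem_inj_iff (i := 0) (j := p.darts.length - 1)
      (hi := by simp at hlen ⊢; omega) (hj := by simp at hlen ⊢; omega)).1 (by simpa using h2)
    omega
  · have h1 := p.isChain_dartAdj_darts
    rw [List.isChain_iff_getElem] at h1 ⊢
    intro i hi
    refine ⟨h1 i hi, fun h => ?_⟩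
    have h2 : (p.darts[i+1]).edge = (p.darts[i]).edge := by rw [h]; simp
    have := (hnd.getElem_inj_iff (i := i+1) (j := i)
      (hi := by simp at hi ⊢; omega) (hj := by simp at hi ⊢; omega)).1 (by simpa using h2)
    omega

/-- Below twice the girth, a cyclically non-backtracking closed walk is a cycle: after rotation, a
repeated vertex would split it into two nonempty closed non-backtracking walks, each at least as
long as the girth. -/
lemma isCycle_of_chain {u : V} (p : G.Walk u u) (hne : ¬ p.Nil)
    (hc : Cycle.Chain (NonBack G) (p.darts : Cycle G.Dart))
    (hl : (p.length : ℕ∞) < 2 * G.egirth) : p.IsCycle := by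
  classical
  have key : ∀ {w : V} (a b : G.Walk w w), ¬ a.Nil → ¬ b.Nil →
      Cycle.Chain (NonBack G) ((a.append b).darts : Cycle G.Dart) →
      2 * G.egirth ≤ (a.append b).length := by
    intro w a b ha hb hab
    have hne' : (a.append b).darts ≠ [] := by
      rw [Ne, SimpleGraph.Walk.darts_eq_nil]; simp [ha]
    rw [Cycle.chain_ne_nil _ hne', List.isChain_cons] at hab
    have hab' := hab.2
    rw [SimpleGraph.Walk.darts_append, List.isChain_append] at hab'
    have h1 := egirth_le_of_isChain a hab'.1 ha
    have h2 := egirth_le_of_isChain b hab'.2.1 hb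
    rw [SimpleGraph.Walk.length_append, two_mul]
    push_cast
    exact add_le_add h1 h2
  have hpath : p.tail.IsPath := by
    by_contra hnp
    rw [SimpleGraph.Walk.isPath_def, SimpleGraph.Walk.support_tail_of_not_nil _ hne] at hnp
    rw [List.nodup_iff_count_le_one] at hnp
    push Not at hnp
    obtain ⟨w, hw⟩ := hnp
    have hwm : w ∈ p.support := List.mem_of_mem_tail (List.count_pos_iff.1 (by omega))
    have hr := (p.support_rotate w hwm).perm.count_eq w
    rw [← hr] at hw
    have hc' : Cycle.Chain (NonBack G) ((p.rotate w hwm).darts : Cycle G.Dart) := by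
      rwa [Cycle.coe_eq_coe.2 (p.rotate_darts w hwm)]
    have hne2 : ¬ (p.rotate w hwm).Nil := by rwa [SimpleGraph.Walk.nil_rotate]
    have hl2 : ((p.rotate w hwm).length : ℕ∞) < 2 * G.egirth := by simpa using hl
    generalize p.rotate w hwm = r at hw hc' hne2 hl2
    cases r with
    | nil => simp at hne2
    | cons h q =>
      simp only [SimpleGraph.Walk.support_cons, List.tail_cons] at hw
      have hwq : w ∈ q.support := by simp
      have hspec := SimpleGraph.Walk.take_spec q hwq
      rw [← hspec, ← SimpleGraph.Walk.cons_append] at hc' hl2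
      refine absurd (key _ _ (by simp) ?_ hc') (not_le.2 hl2)
      intro hnil
      have h1 := SimpleGraph.Walk.count_support_takeUntil_eq_one q hwq
      rw [← hspec, hnil.eq_nil, SimpleGraph.Walk.append_nil] at hw
      omega
  rw [SimpleGraph.Walk.isCycle_iff_isPath_tail_and_le_length]
  refine ⟨hpath, ?_⟩
  rw [Cycle.chain_ne_nil _ (by rwa [Ne, SimpleGraph.Walk.darts_eq_nil]), List.isChain_cons] at hc
  have h3 := egirth_le_of_isChain p hc.2 hne
  exact_mod_cast SimpleGraph.three_le_egirth.trans h3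

end Walks


/-! ### Counting by the Hashimoto matrix -/

section Counting
variable {V : Type*} {G : SimpleGraph V}

open Classical in
/-- The Hashimoto (non-backtracking) matrix of `G`, indexed by darts. -/
noncomputable def hashimoto (G : SimpleGraph V) : Matrix G.Dart G.Dart ℝ :=
  Matrix.of fun d e => if NonBack G d e then 1 else 0

/-- The list `L` holds the intermediate darts, so the chain `e, L, f` makes `l + 1` steps. -/
lemma hashimoto_pow_apply [Fintype G.Dart] [DecidableEq G.Dart] (l : ℕ) (e f : G.Dart) :
    (hashimoto G ^ (l + 1)) e f =
      Nat.card {L : List G.Dart // L.length = l ∧ (e :: (L ++ [f])).IsChain (NonBack G)} := by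
  classical
  induction l generalizing e with
  | zero =>
    by_cases h : NonBack G e f
    · have : Unique {L : List G.Dart //
          L.length = 0 ∧ (e :: (L ++ [f])).IsChain (NonBack G)} :=
        { default := ⟨[], by simp [h]⟩
          uniq := fun ⟨L, hL⟩ => Subtype.ext (List.length_eq_zero_iff.1 hL.1) }
      rw [Nat.card_unique]; simp [hashimoto, h]
    · have : IsEmpty {L : List G.Dart //
          L.length = 0 ∧ (e :: (L ++ [f])).IsChain (NonBack G)} := by
        refine ⟨fun ⟨L, h0, hL⟩ => ?_⟩
        rw [List.length_eq_zero_iff.1 h0] at hL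
        simp at hL
        exact h hL
      rw [Nat.card_of_isEmpty]; simp [hashimoto, h]
  | succ l ih =>
    have hfin : ∀ d : G.Dart, Finite {L : List G.Dart //
        L.length = l ∧ (d :: (L ++ [f])).IsChain (NonBack G)} := fun d =>
      ((List.finite_length_eq G.Dart l).subset (fun L hL => hL.1)).to_subtype
    let φ : (Σ d : {d : G.Dart // NonBack G e d}, {L : List G.Dart //
        L.length = l ∧ (d.1 :: (L ++ [f])).IsChain (NonBack G)}) ≃
        {L : List G.Dart // L.length = l + 1 ∧ (e :: (L ++ [f])).IsChain (NonBack G)} :=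
      Equiv.ofBijective (fun x => ⟨x.1.1 :: x.2.1, by simp [x.2.2.1], by
          have h1 := x.1.2
          have h2 := x.2.2.2
          rw [List.cons_append, List.isChain_cons_cons]
          exact ⟨h1, h2⟩⟩) (by
        constructor
        · rintro ⟨⟨d, hd⟩, ⟨L, hL⟩⟩ ⟨⟨d', hd'⟩, ⟨L', hL'⟩⟩ h
          simp only [Subtype.mk.injEq, List.cons.injEq] at h
          obtain ⟨rfl, rfl⟩ := h
          rfl
        · rintro ⟨L, h1, h2⟩
          cases L with
          | nil => simp at h1
          | cons d L =>
            rw [List.cons_append, List.isChain_cons_cons] at h2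
            exact ⟨⟨⟨d, h2.1⟩, ⟨L, by simpa using h1, h2.2⟩⟩, rfl⟩)
    rw [← Nat.card_congr φ, Nat.card_sigma, pow_succ', Matrix.mul_apply]
    simp_rw [ih]
    simp only [hashimoto, Matrix.of_apply, ite_mul, one_mul, zero_mul]
    rw [← Finset.sum_filter, Nat.cast_sum]
    exact (Finset.sum_subtype _ (by simp) _)

lemma trace_hashimoto_pow [Fintype G.Dart] [DecidableEq G.Dart] (l : ℕ) :
    (hashimoto G ^ (l + 1)).trace =
      Nat.card {L : List G.Dart // L.length = l + 1 ∧
        Cycle.Chain (NonBack G) (L : Cycle G.Dart)} := by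
  have hfin : ∀ d : G.Dart, Finite {L : List G.Dart //
      L.length = l ∧ (d :: (L ++ [d])).IsChain (NonBack G)} := fun d =>
    ((List.finite_length_eq G.Dart l).subset (fun L hL => hL.1)).to_subtype
  let φ : (Σ d : G.Dart, {L : List G.Dart //
      L.length = l ∧ (d :: (L ++ [d])).IsChain (NonBack G)}) ≃
      {L : List G.Dart // L.length = l + 1 ∧ Cycle.Chain (NonBack G) (L : Cycle G.Dart)} :=
    Equiv.ofBijective (fun x => ⟨x.1 :: x.2.1, by simp [x.2.2.1], by
        rw [Cycle.chain_coe_cons]; exact x.2.2.2⟩) (by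
      constructor
      · rintro ⟨d, ⟨L, hL⟩⟩ ⟨d', ⟨L', hL'⟩⟩ h
        simp only [Subtype.mk.injEq, List.cons.injEq] at h
        obtain ⟨rfl, rfl⟩ := h
        rfl
      · rintro ⟨L, h1, h2⟩
        cases L with
        | nil => simp at h1
        | cons d L =>
          rw [Cycle.chain_coe_cons] at h2
          exact ⟨⟨d, ⟨L, by simpa using h1, h2⟩⟩, rfl⟩)
  rw [← Nat.card_congr φ, Nat.card_sigma, Nat.cast_sum]
  simp only [Matrix.trace, Matrix.diag_apply, hashimoto_pow_apply]

/-- Below twice the girth, the trace of a power of the Hashimoto matrix counts the rooted oriented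
cycles; a closed walk is identified with its list of darts. -/
lemma trace_hashimoto_pow_eq_cycleCount [Fintype G.Dart] [DecidableEq G.Dart] (l : ℕ)
    (hl : ((l + 1 : ℕ) : ℕ∞) < 2 * G.egirth) :
    (hashimoto G ^ (l + 1)).trace = cycleCount G (l + 1) := by
  rw [trace_hashimoto_pow, cycleCount]
  congr 1
  symm
  refine Nat.card_congr (Equiv.ofBijective (fun x => ⟨x.1.2.darts, by simp [x.2.1],
    chain_of_isCycle _ x.2.2⟩) ⟨?_, ?_⟩)
  · rintro ⟨⟨v, p⟩, h1, h2⟩ ⟨⟨v', p'⟩, h1', h2'⟩ h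
    simp only [Subtype.mk.injEq] at h
    cases p with
    | nil => simp at h1
    | cons a q =>
      cases p' with
      | nil => simp at h1'
      | cons a' q' =>
        have hv := h
        simp only [SimpleGraph.Walk.darts_cons, List.cons.injEq, SimpleGraph.Dart.mk.injEq,
          Prod.mk.injEq] at hv
        obtain ⟨⟨rfl, -⟩, -⟩ := hv
        simp only [Subtype.mk.injEq, Sigma.mk.injEq, heq_eq_eq, true_and]
        exact SimpleGraph.Walk.darts_injective h
  · rintro ⟨L, h1, h2⟩
    have hne : L ≠ [] := by rintro rfl; simp at h1
    have h3 := h2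
    rw [Cycle.chain_ne_nil _ hne, List.isChain_cons] at h3
    have hadj : L.IsChain G.DartAdj := h3.2.imp fun _ _ h => h.1
    have hclose : (L.getLast hne).snd = (L.head hne).fst :=
      (h3.1 _ (List.head?_eq_some_head hne)).1
    let p := (SimpleGraph.Walk.ofDarts L hne hadj).copy rfl hclose
    have hd : p.darts = L := by simp [p]
    have hlen : p.length = l + 1 := by rw [← SimpleGraph.Walk.length_darts, hd, h1]
    refine ⟨⟨⟨_, p⟩, hlen, isCycle_of_chain p ?_ (by rwa [hd]) (by rwa [hlen])⟩,
      Subtype.ext hd⟩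
    rw [← SimpleGraph.Walk.length_eq_zero_iff, hlen]; omega

lemma cycleCount_eq_zero (l : ℕ) (hl : (l : ℕ∞) < G.egirth) : cycleCount G l = 0 := by
  have : IsEmpty {p : Σ v : V, G.Walk v v // p.2.length = l ∧ p.2.IsCycle} := by
    refine ⟨fun ⟨p, h1, h2⟩ => ?_⟩
    have := SimpleGraph.egirth_le_length h2
    rw [h1] at this
    exact absurd hl (not_lt.2 this)
  simp [cycleCount]

end Counting


/-! ### Factorisation of the Hashimoto matrix -/

section Incidence
set_option linter.unusedSectionVars false
variable {V : Type*} [Fintype V] [DecidableEq V] {G : SimpleGraph V}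

/-- The vertex–dart incidence matrix of sources. -/
noncomputable def srcMat (G : SimpleGraph V) : Matrix V G.Dart ℝ :=
  Matrix.of fun v d => if d.fst = v then 1 else 0

/-- The vertex–dart incidence matrix of targets. -/
noncomputable def tgtMat (G : SimpleGraph V) : Matrix V G.Dart ℝ :=
  Matrix.of fun v d => if d.snd = v then 1 else 0

/-- The permutation matrix of dart reversal. -/
noncomputable def revMat (G : SimpleGraph V) : Matrix G.Dart G.Dart ℝ :=
  Matrix.of fun d e => if e = d.symm then 1 else 0

lemma hashimoto_eq : hashimoto G = (tgtMat G)ᵀ * srcMat G - revMat G := by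
  classical
  ext d e
  simp only [hashimoto, NonBack, tgtMat, srcMat, revMat, Matrix.sub_apply, Matrix.mul_apply,
    Matrix.transpose_apply, Matrix.of_apply, ite_mul, one_mul, zero_mul, Finset.sum_ite_eq,
    Finset.mem_univ, if_true]
  by_cases h : e = d.symm
  · subst h; simp
  · simp [h, eq_comm]

variable [Fintype G.Dart]

lemma srcMat_mul_revMat : srcMat G * revMat G = tgtMat G := by
  classical
  ext v e
  simp only [srcMat, revMat, tgtMat, Matrix.mul_apply, Matrix.of_apply, mul_ite, mul_one, mul_zero]
  rw [Finset.sum_eq_single e.symm]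
  · simp
  · intro d _ hd
    rw [if_neg]
    rintro rfl
    simp at hd
  · simp

lemma revMat_transpose : (revMat G)ᵀ = revMat G := by
  classical
  ext d e
  simp only [revMat, Matrix.transpose_apply, Matrix.of_apply]
  congr 1
  apply propext
  constructor <;> (rintro rfl; simp)

lemma revMat_mul_revMat [DecidableEq G.Dart] : revMat G * revMat G = 1 := by
  ext d e
  simp only [revMat, Matrix.mul_apply, Matrix.of_apply, ite_mul, one_mul, zero_mul,
    Matrix.one_apply]
  rw [Finset.sum_eq_single d.symm]
  · simp [eq_comm]
  · intro b _ hb; simp [hb]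
  · simp

lemma tgtMat_mul_revMat : tgtMat G * revMat G = srcMat G := by
  classical
  rw [← srcMat_mul_revMat, Matrix.mul_assoc, revMat_mul_revMat, Matrix.mul_one]

lemma revMat_mul_tgtMat_transpose : revMat G * (tgtMat G)ᵀ = (srcMat G)ᵀ := by
  rw [← tgtMat_mul_revMat, Matrix.transpose_mul, revMat_transpose]

lemma revMat_mul_srcMat_transpose : revMat G * (srcMat G)ᵀ = (tgtMat G)ᵀ := by
  rw [← srcMat_mul_revMat, Matrix.transpose_mul, revMat_transpose]

lemma tgtMat_mul_transpose : tgtMat G * (tgtMat G)ᵀ = srcMat G * (srcMat G)ᵀ := by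
  conv_lhs => rw [← srcMat_mul_revMat (G := G)]
  rw [srcMat_mul_revMat, ← revMat_mul_srcMat_transpose, ← Matrix.mul_assoc, tgtMat_mul_revMat]

variable [DecidableEq G.Dart]

/-- The matrix whose `(u, v)` entry counts the non-backtracking walks from `u` to `v` with `r + 1`
edges; in particular `nbWalkMat G 0` is the adjacency matrix. -/
noncomputable def nbWalkMat (G : SimpleGraph V) [Fintype G.Dart] [DecidableEq G.Dart] (r : ℕ) :
    Matrix V V ℝ :=
  srcMat G * hashimoto G ^ r * (tgtMat G)ᵀ

lemma nbWalkMat_zero : nbWalkMat G 0 = srcMat G * (tgtMat G)ᵀ := by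
  simp [nbWalkMat]

lemma nbWalkMat_one :
    nbWalkMat G 1 = nbWalkMat G 0 * nbWalkMat G 0 - srcMat G * (srcMat G)ᵀ := by
  rw [nbWalkMat_zero, nbWalkMat, pow_one, hashimoto_eq, Matrix.mul_sub, Matrix.sub_mul,
    srcMat_mul_revMat, tgtMat_mul_transpose]
  simp only [Matrix.mul_assoc]

/-- Extending a non-backtracking walk by one edge, and removing the extensions that backtrack. Here
`srcMat G * (srcMat G)ᵀ` is the diagonal matrix of degrees. -/
lemma nbWalkMat_succ_succ (r : ℕ) :
    nbWalkMat G (r + 2) = nbWalkMat G (r + 1) * nbWalkMat G 0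
      - nbWalkMat G r * (srcMat G * (srcMat G)ᵀ - 1) := by
  have h1 : srcMat G * hashimoto G ^ (r + 1) * (srcMat G)ᵀ
      = nbWalkMat G r * (srcMat G * (srcMat G)ᵀ - 1) := by
    rw [pow_succ]
    nth_rewrite 2 [hashimoto_eq]
    simp only [nbWalkMat, Matrix.mul_sub, Matrix.sub_mul, Matrix.mul_assoc,
      revMat_mul_srcMat_transpose, Matrix.mul_one]
  rw [← h1, nbWalkMat_zero, nbWalkMat, pow_succ]
  nth_rewrite 2 [hashimoto_eq]
  simp only [nbWalkMat, Matrix.mul_sub, Matrix.sub_mul, Matrix.mul_assoc,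
    revMat_mul_tgtMat_transpose]

/-- Closed non-backtracking walks are cyclically non-backtracking unless their last dart reverses
their first one; stripping off these two darts (the tail) gives the correction terms. -/
lemma trace_hashimoto_pow_rec (r : ℕ) :
    (hashimoto G ^ (r + 3)).trace = (nbWalkMat G (r + 2)).trace
      - (nbWalkMat G r * (srcMat G * (srcMat G)ᵀ - 1)).trace
      + (hashimoto G ^ (r + 1)).trace := by
  have h1 : (hashimoto G ^ (r + 3)).trace = (nbWalkMat G (r + 2)).trace
      - (hashimoto G ^ (r + 2) * revMat G).trace := by
    rw [pow_succ]
    nth_rewrite 2 [hashimoto_eq]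
    rw [Matrix.mul_sub, Matrix.trace_sub, ← Matrix.mul_assoc, Matrix.trace_mul_comm,
      ← Matrix.mul_assoc]
    rfl
  have h2 : (hashimoto G ^ (r + 2) * revMat G).trace
      = (tgtMat G * hashimoto G ^ (r + 1) * (tgtMat G)ᵀ).trace
        - (hashimoto G ^ (r + 1)).trace := by
    rw [pow_succ]
    nth_rewrite 2 [hashimoto_eq]
    rw [Matrix.mul_sub, Matrix.sub_mul, Matrix.trace_sub, Matrix.mul_assoc _ (revMat G),
      revMat_mul_revMat, Matrix.mul_one, Matrix.mul_assoc, Matrix.mul_assoc, srcMat_mul_revMat,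
      ← Matrix.mul_assoc, Matrix.trace_mul_comm, ← Matrix.mul_assoc]
  have h3 : tgtMat G * hashimoto G ^ (r + 1) * (tgtMat G)ᵀ
      = (srcMat G * (srcMat G)ᵀ - 1) * nbWalkMat G r := by
    rw [pow_succ']
    nth_rewrite 1 [hashimoto_eq]
    rw [← Matrix.mul_assoc, Matrix.mul_sub, ← Matrix.mul_assoc, tgtMat_mul_revMat,
      tgtMat_mul_transpose]
    simp only [nbWalkMat, Matrix.sub_mul, Matrix.mul_assoc, Matrix.one_mul]
  rw [h1, h2, h3, Matrix.trace_mul_comm (srcMat G * (srcMat G)ᵀ - 1)]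
  ring

end Incidence

/-! ### Biregular graphs -/

section Biregular
variable {V : Type*} [Fintype V] [DecidableEq V] {G : SimpleGraph V} [Fintype G.Dart]
  [DecidableEq G.Dart]

/-- In a biregular bipartite graph, `Q` (degrees minus one) takes two values with sum `s` and
product `c`, and multiplication by `A` swaps them. Two steps of the walk recursion then combine
into a recursion with scalar coefficients. -/
lemma nbWalkMat_even_rec (A Q : Matrix V V ℝ) (s c : ℝ) (hA : nbWalkMat G 0 = A)
    (hQ : srcMat G * (srcMat G)ᵀ - 1 = Q) (hQA : Q * A = A * (s • 1 - Q))
    (hQQ : Q * Q = s • Q - c • 1) (r : ℕ) :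
    nbWalkMat G (r + 4) = nbWalkMat G (r + 2) * (A * A) - s • nbWalkMat G (r + 2)
      - c • nbWalkMat G r := by
  have h2 := nbWalkMat_succ_succ (G := G) r
  have h3 := nbWalkMat_succ_succ (G := G) (r + 1)
  have h4 := nbWalkMat_succ_succ (G := G) (r + 2)
  rw [hA, hQ] at h2 h3 h4
  have h2' : nbWalkMat G (r + 1) * A = nbWalkMat G (r + 2) + nbWalkMat G r * Q := by
    rw [h2]; abel
  rw [show r + 2 + 2 = r + 4 from rfl, show r + 2 + 1 = r + 1 + 2 from rfl, h3,
    Matrix.sub_mul, Matrix.mul_assoc _ Q, hQA, ← Matrix.mul_assoc _ A (_ - _), h2',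
    show r + 1 + 1 = r + 2 from rfl] at h4
  rw [h4]
  simp only [Matrix.add_mul, Matrix.mul_sub, Matrix.mul_assoc, hQQ, Matrix.mul_smul,
    Matrix.mul_one]
  module

/-- The initial case of the two-step recursion. Its last term differs from the general one because
the backtracking walks with two edges are counted by the degrees rather than by `Q`. -/
lemma nbWalkMat_three (A Q : Matrix V V ℝ) (s c : ℝ) (hA : nbWalkMat G 0 = A)
    (hQ : srcMat G * (srcMat G)ᵀ - 1 = Q) (hQA : Q * A = A * (s • 1 - Q))
    (hQQ : Q * Q = s • Q - c • 1) :
    nbWalkMat G 3 = nbWalkMat G 1 * (A * A) - s • nbWalkMat G 1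
      - ((c + s) • 1 - Q) := by
  have h1 := nbWalkMat_one (G := G)
  have h2 := nbWalkMat_succ_succ (G := G) 0
  have h3 := nbWalkMat_succ_succ (G := G) 1
  rw [show srcMat G * (srcMat G)ᵀ = Q + 1 by rw [← hQ]; abel] at h1
  simp only [hA, hQ, Nat.reduceAdd] at h1 h2 h3
  have h1' : A * A = nbWalkMat G 1 + (Q + 1) := by rw [h1]; abel
  rw [h2, Matrix.sub_mul, Matrix.mul_assoc A, hQA, ← Matrix.mul_assoc A, Matrix.mul_assoc _ A A]
    at h3
  rw [h3]
  nth_rewrite 2 [h1']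
  simp only [Matrix.add_mul, Matrix.mul_sub, hQQ, Matrix.mul_smul,
    Matrix.mul_one, Matrix.one_mul, add_smul]
  module


/-- Since `A` swaps the two sides of the bipartition, `Q` may be replaced by its average `s / 2`
inside the trace of a positive power of `A * A`. -/
lemma trace_pow_mul_Q (A Q : Matrix V V ℝ) (s : ℝ) (hQA : Q * A = A * (s • 1 - Q)) (j : ℕ) :
    ((A * A) ^ (j + 1) * Q).trace = s / 2 * ((A * A) ^ (j + 1)).trace := by
  have hcomm : A * (A * A) ^ j * A = (A * A) ^ (j + 1) := by
    rw [← sq, ← pow_mul, ← pow_mul, ← pow_succ', ← pow_succ]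
    congr 1
  have h1 : ((A * A) ^ (j + 1) * Q).trace = (Q * A * (A * A) ^ j * A).trace := by
    rw [Matrix.trace_mul_comm, ← hcomm]
    simp only [Matrix.mul_assoc]
  have h2 : (Q * A * (A * A) ^ j * A).trace
      = s * ((A * A) ^ (j + 1)).trace - ((A * A) ^ (j + 1) * Q).trace := by
    rw [hQA, Matrix.mul_assoc, Matrix.mul_assoc, Matrix.trace_mul_comm, Matrix.mul_assoc,
      Matrix.mul_assoc, ← pow_succ, Matrix.trace_mul_comm, Matrix.mul_sub, Matrix.trace_sub,
      Matrix.mul_smul, Matrix.mul_one, Matrix.trace_smul, smul_eq_mul]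
  linarith

end Biregular

/-! ### Solving the scalar trace system -/

set_option maxHeartbeats 2000000 in
/-- The trace system, with matrices replaced by their traces. Writing `A` for the adjacency matrix,
`Q` for the degrees minus one, `W` for the non-backtracking walk matrices and `B` for the Hashimoto
matrix, the letters stand for `x j = tr (A²)^j`, `y j = tr ((A²)^j Q)`, `C k = tr B^(2k+2)`,
`F k j = tr (W_(2k+1) (A²)^j)` and `K k j = tr (W_(2k+1) (A²)^j Q)`; `t (q1 + 1)` and `t (q2 + 1)`
are the sizes of the two sides, so `t (q1 + 1) (q2 + 1)` is the number of edges. For each `k`,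
`hC k` determines `x (k + 2)` from `C (k + 1)` and earlier values. -/
lemma scalar_elimination (q1 q2 t : ℝ) (x y C : ℕ → ℝ) (F K : ℕ → ℕ → ℝ)
    (hx0 : x 0 = t * (q1 + 1) + t * (q2 + 1))
    (hy0 : y 0 = t * (q1 + 1) * q2 + t * (q2 + 1) * q1)
    (hx1 : x 1 = 2 * (t * (q1 + 1) * (q2 + 1)))
    (hy : ∀ j, y (j + 1) = (q1 + q2) / 2 * x (j + 1))
    (hF0 : ∀ j, F 0 j = x (j + 1) - y j - x j)
    (hK0 : ∀ j, K 0 j = y (j + 1) - ((q1 + q2) * y j - q1 * q2 * x j) - y j)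
    (hF1 : ∀ j, F 1 j = F 0 (j + 1) - (q1 + q2) * F 0 j
      - ((q1 * q2 + (q1 + q2)) * x j - y j))
    (hK1 : ∀ j, K 1 j = K 0 (j + 1) - (q1 + q2) * K 0 j - q1 * q2 * (x j + y j))
    (hF : ∀ k j, F (k + 2) j = F (k + 1) (j + 1) - (q1 + q2) * F (k + 1) j - q1 * q2 * F k j)
    (hK : ∀ k j, K (k + 2) j = K (k + 1) (j + 1) - (q1 + q2) * K (k + 1) j - q1 * q2 * K k j)
    (hC : ∀ k, C (k + 1) = F (k + 1) 0 - K k 0 + C k)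
    (hC0 : C 0 = 0) (hC1 : C 1 = 0) (hC2 : C 2 = 0) :
    let s : ℝ := q1 + q2
    let c : ℝ := q1 * q2
    let A4 : ℝ := q1 + q2 + 1
    let A6 : ℝ := (q1 + q2 + 1) ^ 2 + c
    let A8 : ℝ := (q1 + q2 + 1) ^ 3 + c * (3 * q1 + 3 * q2 + 2)
    let A10 : ℝ := -1 + (q1 ^ 4 - q1 ^ 3 + q1 ^ 2 - q1 + 1)
        + (q2 ^ 4 - q2 ^ 3 + q2 ^ 2 - q2 + 1)
        - 5 * (∑ j ∈ Finset.range 5, q1 ^ j * q2 ^ (4 - j))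
        + 5 * s * A8 - (10 * s ^ 2 - 5 * c) * A6 + (10 * s ^ 3 - 15 * c * s) * A4
    let A12 : ℝ := -1 - (q1 ^ 5 - q1 ^ 4 + q1 ^ 3 - q1 ^ 2 + q1 - 1)
        - (q2 ^ 5 - q2 ^ 4 + q2 ^ 3 - q2 ^ 2 + q2 - 1)
        + 6 * (∑ j ∈ Finset.range 6, q1 ^ j * q2 ^ (5 - j))
        + 6 * s * A10 - (15 * s ^ 2 - 6 * c) * A8 + (20 * s ^ 3 - 24 * c * s) * A6
        - (15 * s ^ 4 - 36 * c * s ^ 2 + 9 * c ^ 2) * A4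
    let A14 : ℝ := -1 + (q1 ^ 6 - q1 ^ 5 + q1 ^ 4 - q1 ^ 3 + q1 ^ 2 - q1 + 1)
        + (q2 ^ 6 - q2 ^ 5 + q2 ^ 4 - q2 ^ 3 + q2 ^ 2 - q2 + 1)
        - 7 * (∑ j ∈ Finset.range 7, q1 ^ j * q2 ^ (6 - j))
        + 7 * s * A12 - (21 * s ^ 2 - 7 * c) * A10 + (35 * s ^ 3 - 35 * c * s) * A8
        - (35 * s ^ 4 - 70 * c * s ^ 2 + 14 * c ^ 2) * A6
        + (21 * s ^ 5 - 70 * c * s ^ 3 + 42 * c ^ 2 * s) * A4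
    x 7 = C 6 + 7 * s * C 5 + 7 * (3 * s ^ 2 + c) * C 4 + 7 * s * (5 * s ^ 2 + 6 * c) * C 3
      + 2 * (t * (q1 + 1) * (q2 + 1)) * A14 := by
  simp -zeta only [Finset.sum_range_succ, Finset.sum_range_zero]
  intro s c A4 A6 A8 A10 A12 A14
  have e1 := hC 0
  have e2 := hC 1
  have e3 := hC 2
  have e4 := hC 3
  have e5 := hC 4
  have e6 := hC 5
  norm_num only [hF, hK, hF1, hK1, hF0, hK0, hy, hy0, hx0, hx1, hC0, hC1, hC2] at e1 e2 e3 e4 e5 e6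
  have hx2 : x 2 = 2 * (t * (q1 + 1) * (q2 + 1)) * A4 := by
    simp only [A4]
    linear_combination -e1
  rw [hx2] at e2 e3 e4 e5 e6
  have hx3 : x 3 = 2 * (t * (q1 + 1) * (q2 + 1)) * A6 := by
    simp only [A6, c]
    linear_combination -e2
  rw [hx3] at e3 e4 e5 e6
  have hx4 : x 4 = C 3 + 2 * (t * (q1 + 1) * (q2 + 1)) * A8 := by
    simp only [A8, c]
    linear_combination -e3
  rw [hx4] at e4 e5 e6
  have hx5 : x 5 = C 4 + 5 * s * C 3 + 2 * (t * (q1 + 1) * (q2 + 1)) * A10 := by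
    simp only [A10, A8, A6, A4, s, c]
    linear_combination -e4
  rw [hx5] at e5 e6
  have hx6 : x 6 = C 5 + 6 * s * C 4 + (15 * s ^ 2 + 6 * c) * C 3
      + 2 * (t * (q1 + 1) * (q2 + 1)) * A12 := by
    simp only [A12, A10, A8, A6, A4, s, c]
    linear_combination -e5
  rw [hx6] at e6
  simp only [A14, A12, A10, A8, A6, A4, s, c]
  linear_combination -e6


/-! ### Traces of non-backtracking walk matrices -/

section TraceSystem
variable {V : Type*} [Fintype V] [DecidableEq V] {G : SimpleGraph V} [Fintype G.Dart]
  [DecidableEq G.Dart]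

lemma trace_mul_self_Q (Q X : Matrix V V ℝ) (s c : ℝ) (hQQ : Q * Q = s • Q - c • 1) :
    (Q * X * Q).trace = s * (X * Q).trace - c * X.trace := by
  rw [Matrix.mul_assoc, Matrix.trace_mul_comm, Matrix.mul_assoc, hQQ, Matrix.mul_sub,
    Matrix.mul_smul, Matrix.mul_smul, Matrix.mul_one, Matrix.trace_sub, Matrix.trace_smul,
    Matrix.trace_smul, smul_eq_mul, smul_eq_mul]

lemma nbWalkMat_one' (A Q : Matrix V V ℝ) (hA : nbWalkMat G 0 = A)
    (hQ : srcMat G * (srcMat G)ᵀ - 1 = Q) : nbWalkMat G 1 = A * A - Q - 1 := by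
  rw [nbWalkMat_one, hA, ← hQ]; abel

lemma traceF_zero (A Q : Matrix V V ℝ) (hA : nbWalkMat G 0 = A)
    (hQ : srcMat G * (srcMat G)ᵀ - 1 = Q) (j : ℕ) :
    (nbWalkMat G 1 * (A * A) ^ j).trace
      = ((A * A) ^ (j + 1)).trace - ((A * A) ^ j * Q).trace - ((A * A) ^ j).trace := by
  rw [nbWalkMat_one' A Q hA hQ, Matrix.sub_mul, Matrix.sub_mul, ← pow_succ', Matrix.one_mul,
    Matrix.trace_sub, Matrix.trace_sub, Matrix.trace_mul_comm Q]

lemma traceK_zero (A Q : Matrix V V ℝ) (s c : ℝ) (hA : nbWalkMat G 0 = A)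
    (hQ : srcMat G * (srcMat G)ᵀ - 1 = Q) (hQQ : Q * Q = s • Q - c • 1) (j : ℕ) :
    (nbWalkMat G 1 * (A * A) ^ j * Q).trace
      = ((A * A) ^ (j + 1) * Q).trace
        - (s * ((A * A) ^ j * Q).trace - c * ((A * A) ^ j).trace) - ((A * A) ^ j * Q).trace := by
  rw [nbWalkMat_one' A Q hA hQ, Matrix.sub_mul, Matrix.sub_mul, Matrix.sub_mul,
    Matrix.sub_mul, ← pow_succ', Matrix.one_mul, Matrix.trace_sub, Matrix.trace_sub,
    trace_mul_self_Q Q _ s c hQQ]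

lemma traceF_one (A Q : Matrix V V ℝ) (s c : ℝ) (hA : nbWalkMat G 0 = A)
    (hQ : srcMat G * (srcMat G)ᵀ - 1 = Q) (hQA : Q * A = A * (s • 1 - Q))
    (hQQ : Q * Q = s • Q - c • 1) (j : ℕ) :
    (nbWalkMat G 3 * (A * A) ^ j).trace
      = (nbWalkMat G 1 * (A * A) ^ (j + 1)).trace - s * (nbWalkMat G 1 * (A * A) ^ j).trace
        - ((c + s) * ((A * A) ^ j).trace - ((A * A) ^ j * Q).trace) := by
  rw [nbWalkMat_three A Q s c hA hQ hQA hQQ]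
  simp only [Matrix.sub_mul, Matrix.smul_mul, Matrix.one_mul, Matrix.trace_sub,
    Matrix.trace_smul, smul_eq_mul, Matrix.mul_assoc _ (A * A), ← pow_succ',
    Matrix.trace_mul_comm Q]

lemma traceK_one (A Q : Matrix V V ℝ) (s c : ℝ) (hA : nbWalkMat G 0 = A)
    (hQ : srcMat G * (srcMat G)ᵀ - 1 = Q) (hQA : Q * A = A * (s • 1 - Q))
    (hQQ : Q * Q = s • Q - c • 1) (j : ℕ) :
    (nbWalkMat G 3 * (A * A) ^ j * Q).trace
      = (nbWalkMat G 1 * (A * A) ^ (j + 1) * Q).trace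
        - s * (nbWalkMat G 1 * (A * A) ^ j * Q).trace
        - c * (((A * A) ^ j).trace + ((A * A) ^ j * Q).trace) := by
  have h := trace_mul_self_Q Q ((A * A) ^ j) s c hQQ
  rw [nbWalkMat_three A Q s c hA hQ hQA hQQ]
  simp only [Matrix.sub_mul, Matrix.smul_mul, Matrix.one_mul, Matrix.trace_sub,
    Matrix.trace_smul, smul_eq_mul, h]
  rw [Matrix.mul_assoc _ (A * A) ((A * A) ^ j), ← pow_succ']
  ring

lemma traceF_rec (A Q : Matrix V V ℝ) (s c : ℝ) (hA : nbWalkMat G 0 = A)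
    (hQ : srcMat G * (srcMat G)ᵀ - 1 = Q) (hQA : Q * A = A * (s • 1 - Q))
    (hQQ : Q * Q = s • Q - c • 1) (r j : ℕ) :
    (nbWalkMat G (r + 4) * (A * A) ^ j).trace
      = (nbWalkMat G (r + 2) * (A * A) ^ (j + 1)).trace
        - s * (nbWalkMat G (r + 2) * (A * A) ^ j).trace
        - c * (nbWalkMat G r * (A * A) ^ j).trace := by
  rw [nbWalkMat_even_rec A Q s c hA hQ hQA hQQ, pow_succ']
  simp only [Matrix.sub_mul, Matrix.smul_mul, Matrix.trace_sub, Matrix.trace_smul, smul_eq_mul,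
    Matrix.mul_assoc]

lemma traceK_rec (A Q : Matrix V V ℝ) (s c : ℝ) (hA : nbWalkMat G 0 = A)
    (hQ : srcMat G * (srcMat G)ᵀ - 1 = Q) (hQA : Q * A = A * (s • 1 - Q))
    (hQQ : Q * Q = s • Q - c • 1) (r j : ℕ) :
    (nbWalkMat G (r + 4) * (A * A) ^ j * Q).trace
      = (nbWalkMat G (r + 2) * (A * A) ^ (j + 1) * Q).trace
        - s * (nbWalkMat G (r + 2) * (A * A) ^ j * Q).trace
        - c * (nbWalkMat G r * (A * A) ^ j * Q).trace := by
  rw [nbWalkMat_even_rec A Q s c hA hQ hQA hQQ, pow_succ']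
  simp only [Matrix.sub_mul, Matrix.smul_mul, Matrix.trace_sub, Matrix.trace_smul, smul_eq_mul,
    Matrix.mul_assoc]

end TraceSystem


/-! ### The Tanner graph in block form -/

section Tanner

lemma nbWalkMat_zero_apply {V : Type*} [DecidableEq V] {G : SimpleGraph V} [Fintype G.Dart]
    [DecidableEq G.Dart] [DecidableRel G.Adj] (u v : V) :
    nbWalkMat G 0 u v = if G.Adj u v then 1 else 0 := by
  simp only [nbWalkMat, pow_zero, Matrix.mul_one, Matrix.mul_apply, Matrix.transpose_apply,
    srcMat, tgtMat, Matrix.of_apply]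
  by_cases h : G.Adj u v
  · rw [if_pos h, Finset.sum_eq_single ⟨(u, v), h⟩]
    · simp
    · intro d _ hd
      by_cases h1 : d.fst = u
      · rw [if_neg (fun h2 : d.snd = v => hd (SimpleGraph.Dart.ext _ _ (Prod.ext h1 h2))),
          mul_zero]
      · simp [h1]
    · simp
  · rw [if_neg h]
    refine Finset.sum_eq_zero fun d _ => ?_
    by_cases h1 : d.fst = u
    · by_cases h2 : d.snd = v
      · exact absurd (h1 ▸ h2 ▸ d.adj) h
      · simp [h2]
    · simp [h1]

lemma srcMat_mul_transpose {V : Type*} [Fintype V] [DecidableEq V] {G : SimpleGraph V}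
    [Fintype G.Dart] [DecidableEq G.Dart] :
    srcMat G * (srcMat G)ᵀ = Matrix.diagonal fun u => ∑ v, nbWalkMat G 0 u v := by
  ext u v
  simp only [nbWalkMat, pow_zero, Matrix.mul_one, Matrix.mul_apply, Matrix.transpose_apply,
    srcMat, tgtMat, Matrix.of_apply, Matrix.diagonal_apply]
  split_ifs with h
  · subst h
    rw [Finset.sum_comm]
    refine Finset.sum_congr rfl fun d _ => ?_
    rw [← Finset.mul_sum]
    simp
  · refine Finset.sum_eq_zero fun d _ => ?_
    by_cases h1 : d.fst = u
    · simp [show ¬ d.fst = v from fun h2 => h (h1 ▸ h2)]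
    · simp [h1]

lemma sum_eq_card {ι : Type*} [Fintype ι] (f : ι → ℝ) (hf : ∀ i, f i = 0 ∨ f i = 1) :
    ∑ i, f i = Nat.card {i // f i = 1} := by
  classical
  rw [Nat.card_eq_fintype_card, Fintype.card_subtype, Finset.card_filter]
  push_cast
  refine Finset.sum_congr rfl fun i _ => ?_
  rcases hf i with h | h <;> simp [h]

variable {m n : ℕ} (H : Matrix (Fin m) (Fin n) ℝ)

lemma nbWalkMat_zero_tannerGraph (hent : ∀ i j, H i j = 0 ∨ H i j = 1)
    [Fintype (tannerGraph H).Dart] [DecidableEq (tannerGraph H).Dart] :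
    nbWalkMat (tannerGraph H) 0 = Matrix.fromBlocks 0 H Hᵀ 0 := by
  classical
  ext u v
  rw [nbWalkMat_zero_apply]
  rcases u with i | j <;> rcases v with i' | j'
  · simp [tannerGraph]
  · rcases hent i j' with h | h <;> simp [tannerGraph, h]
  · rcases hent i' j with h | h <;> simp [tannerGraph, h]
  · simp [tannerGraph]

lemma transpose_mul_pow (k : ℕ) : (Hᵀ * H) ^ (k + 1) = Hᵀ * (H * Hᵀ) ^ k * H := by
  induction k with
  | zero => simp
  | succ k ih =>
    rw [pow_succ, ih, pow_succ]
    simp only [Matrix.mul_assoc]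

lemma trace_fromBlocks_pow (k : ℕ) :
    ((Matrix.fromBlocks 0 H Hᵀ 0 * Matrix.fromBlocks 0 H Hᵀ 0) ^ (k + 1)).trace
      = 2 * ((H * Hᵀ) ^ (k + 1)).trace := by
  have h : ((Hᵀ * H) ^ (k + 1)).trace = ((H * Hᵀ) ^ (k + 1)).trace := by
    rw [transpose_mul_pow, Matrix.mul_assoc, Matrix.trace_mul_comm, Matrix.mul_assoc, ← pow_succ]
  rw [Matrix.fromBlocks_multiply]
  simp only [Matrix.zero_mul, Matrix.mul_zero, zero_add, add_zero]
  rw [Matrix.fromBlocks_diagonal_pow, two_mul]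
  nth_rewrite 2 [← h]
  simp [Matrix.trace, Fintype.sum_sum_type]

end Tanner

/-- Corollary 4(3), second formula: the number of 14-cycles `N_14` in terms of
`N_12`, `N_10`, `N_8` and `T_7 = trace((H Hᵀ)⁷)`. -/
theorem fourteen_cycles
    (q1 q2 m n : ℕ) (hq1 : 1 ≤ q1) (hq12 : q1 ≤ q2) (hq2 : 2 ≤ q2)
    (hm : 0 < m) (hn : 0 < n)
    (H : Matrix (Fin m) (Fin n) ℝ)
    (hent : ∀ i j, H i j = 0 ∨ H i j = 1)
    (hcol : ∀ j, Nat.card {i : Fin m // H i j = 1} = q1 + 1)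
    (hrow : ∀ i, Nat.card {j : Fin n // H i j = 1} = q2 + 1)
    (hconn : (tannerGraph H).Connected)
    (hg : (8 : ℕ∞) ≤ (tannerGraph H).egirth) :
    let s : ℝ := (q1 : ℝ) + q2
    let c : ℝ := (q1 : ℝ) * q2
    let A4 : ℝ := (q1 : ℝ) + q2 + 1
    let A6 : ℝ := ((q1 : ℝ) + q2 + 1) ^ 2 + c
    let A8 : ℝ := ((q1 : ℝ) + q2 + 1) ^ 3 + c * (3 * q1 + 3 * q2 + 2)
    let A10 : ℝ := -1 + ((q1 : ℝ) ^ 4 - (q1 : ℝ) ^ 3 + (q1 : ℝ) ^ 2 - q1 + 1)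
        + ((q2 : ℝ) ^ 4 - (q2 : ℝ) ^ 3 + (q2 : ℝ) ^ 2 - q2 + 1)
        - 5 * (∑ j ∈ Finset.range 5, (q1 : ℝ) ^ j * (q2 : ℝ) ^ (4 - j))
        + 5 * s * A8 - (10 * s ^ 2 - 5 * c) * A6 + (10 * s ^ 3 - 15 * c * s) * A4
    let A12 : ℝ := -1 - ((q1 : ℝ) ^ 5 - (q1 : ℝ) ^ 4 + (q1 : ℝ) ^ 3 - (q1 : ℝ) ^ 2 + q1 - 1)
        - ((q2 : ℝ) ^ 5 - (q2 : ℝ) ^ 4 + (q2 : ℝ) ^ 3 - (q2 : ℝ) ^ 2 + q2 - 1)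
        + 6 * (∑ j ∈ Finset.range 6, (q1 : ℝ) ^ j * (q2 : ℝ) ^ (5 - j))
        + 6 * s * A10 - (15 * s ^ 2 - 6 * c) * A8 + (20 * s ^ 3 - 24 * c * s) * A6
        - (15 * s ^ 4 - 36 * c * s ^ 2 + 9 * c ^ 2) * A4
    let A14 : ℝ := -1 + ((q1 : ℝ) ^ 6 - (q1 : ℝ) ^ 5 + (q1 : ℝ) ^ 4 - (q1 : ℝ) ^ 3 + (q1 : ℝ) ^ 2 - q1 + 1)
        + ((q2 : ℝ) ^ 6 - (q2 : ℝ) ^ 5 + (q2 : ℝ) ^ 4 - (q2 : ℝ) ^ 3 + (q2 : ℝ) ^ 2 - q2 + 1)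
        - 7 * (∑ j ∈ Finset.range 7, (q1 : ℝ) ^ j * (q2 : ℝ) ^ (6 - j))
        + 7 * s * A12 - (21 * s ^ 2 - 7 * c) * A10 + (35 * s ^ 3 - 35 * c * s) * A8
        - (35 * s ^ 4 - 70 * c * s ^ 2 + 14 * c ^ 2) * A6
        + (21 * s ^ 5 - 70 * c * s ^ 3 + 42 * c ^ 2 * s) * A4
    numCycles (tannerGraph H) 7 =
      -6 * s * numCycles (tannerGraph H) 6
      - 5 * (3 * s ^ 2 + c) * numCycles (tannerGraph H) 5
      - 4 * s * (5 * s ^ 2 + 6 * c) * numCycles (tannerGraph H) 4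
      + (Matrix.trace ((H * H.transpose) ^ 7) - ((n * (q1 + 1) : ℕ) : ℝ) * A14) / 14 := by
  classical
  intro s c A4 A6 A8 A10 A12 A14
  have hrow' : ∀ i, ∑ j, H i j = (q2 : ℝ) + 1 := fun i => by
    rw [sum_eq_card _ (hent i), hrow i]; push_cast; rfl
  have hcol' : ∀ j, ∑ i, H i j = (q1 : ℝ) + 1 := fun j => by
    rw [sum_eq_card _ (fun i => hent i j), hcol j]; push_cast; rfl
  have hE : (m : ℝ) * (q2 + 1) = n * (q1 + 1) := by
    have h := Finset.sum_comm (s := Finset.univ) (t := Finset.univ) (f := fun i j => H i j)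
    simpa [hrow', hcol', mul_add] using h
  set G := tannerGraph H with hG
  set A : Matrix (Fin m ⊕ Fin n) (Fin m ⊕ Fin n) ℝ := Matrix.fromBlocks 0 H Hᵀ 0 with hAdef
  set Q : Matrix (Fin m ⊕ Fin n) (Fin m ⊕ Fin n) ℝ :=
    Matrix.fromBlocks ((q2 : ℝ) • 1) 0 0 ((q1 : ℝ) • 1) with hQdef
  have hA : nbWalkMat G 0 = A := nbWalkMat_zero_tannerGraph H hent
  have hQ : srcMat G * (srcMat G)ᵀ - 1 = Q := by
    rw [srcMat_mul_transpose, hA, hQdef, sub_eq_iff_eq_add, ← Matrix.fromBlocks_one,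
      Matrix.fromBlocks_add]
    ext u v
    rcases u with i | j <;> rcases v with i' | j' <;>
      simp [A, Matrix.diagonal_apply, Matrix.one_apply, hrow', hcol', Fintype.sum_sum_type]
    all_goals split_ifs <;> simp
  have hQA : Q * A = A * (s • 1 - Q) := by
    rw [hAdef, hQdef, ← Matrix.fromBlocks_one, Matrix.fromBlocks_smul, sub_eq_add_neg,
      Matrix.fromBlocks_neg, Matrix.fromBlocks_add, Matrix.fromBlocks_multiply,
      Matrix.fromBlocks_multiply]
    simp [s, ← sub_eq_add_neg, ← sub_smul]
  have hQQ : Q * Q = s • Q - c • 1 := by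
    rw [hQdef, ← Matrix.fromBlocks_one, Matrix.fromBlocks_smul, Matrix.fromBlocks_smul,
      sub_eq_add_neg, Matrix.fromBlocks_neg, Matrix.fromBlocks_add, Matrix.fromBlocks_multiply]
    simp only [Matrix.mul_zero, Matrix.zero_mul, add_zero, zero_add, smul_zero, neg_zero,
      Matrix.smul_mul, Matrix.one_mul, smul_smul, ← neg_smul, ← add_smul]
    congr 2 <;> (simp only [s, c]; ring)
  -- `t` is chosen so that `m = t * (q1 + 1)` and `n = t * (q2 + 1)`.
  obtain ⟨t, htn⟩ : ∃ t : ℝ, (n : ℝ) = t * (q2 + 1) :=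
    ⟨n / (q2 + 1), by field_simp⟩
  have htm : (m : ℝ) = t * (q1 + 1) := by
    have : (q2 : ℝ) + 1 ≠ 0 := by positivity
    refine mul_right_cancel₀ this ?_
    rw [hE, htn]; ring
  have hT1 : (H * Hᵀ).trace = n * ((q1 : ℝ) + 1) := by
    rw [← hE]
    simp only [Matrix.trace, Matrix.diag_apply, Matrix.mul_apply, Matrix.transpose_apply]
    have : ∀ i j, H i j * H i j = H i j := fun i j => by
      rcases hent i j with h | h <;> simp [h]
    simp [this, hrow', mul_add]
  have hcyc : ∀ k : ℕ, k ≤ 6 → (hashimoto G ^ (2 * k + 2)).trace = cycleCount G (2 * (k + 1)) := by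
    intro k hk
    refine trace_hashimoto_pow_eq_cycleCount (2 * k + 1) (lt_of_lt_of_le ?_ (mul_right_mono hg))
    show ((2 * k + 1 + 1 : ℕ) : ℕ∞) < 2 * 8
    exact_mod_cast (by omega : 2 * k + 1 + 1 < 2 * 8)
  have hcyc0 : ∀ k : ℕ, k ≤ 2 → (hashimoto G ^ (2 * k + 2)).trace = 0 := by
    intro k hk
    rw [hcyc k (by omega), cycleCount_eq_zero, Nat.cast_zero]
    exact lt_of_lt_of_le (by exact_mod_cast (by omega : 2 * (k + 1) < 8)) hg
  have key := scalar_elimination (q1 : ℝ) q2 t (fun j => ((A * A) ^ j).trace)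
    (fun j => ((A * A) ^ j * Q).trace) (fun k => (hashimoto G ^ (2 * k + 2)).trace)
    (fun k j => (nbWalkMat G (2 * k + 1) * (A * A) ^ j).trace)
    (fun k j => (nbWalkMat G (2 * k + 1) * (A * A) ^ j * Q).trace)
    (by simp [htm, htn])
    (by
      simp [Q, Matrix.trace, Fintype.sum_sum_type, htm, htn])
    (by
      have h := trace_fromBlocks_pow H 0
      rw [zero_add, pow_one (H * Hᵀ), hT1, htn] at h
      simp only [hAdef]
      rw [h]; ring)
    (fun j => trace_pow_mul_Q A Q s hQA j)
    (fun j => traceF_zero A Q hA hQ j)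
    (fun j => traceK_zero A Q s c hA hQ hQQ j)
    (fun j => traceF_one A Q s c hA hQ hQA hQQ j)
    (fun j => traceK_one A Q s c hA hQ hQA hQQ j)
    (fun k j => traceF_rec A Q s c hA hQ hQA hQQ (2 * k + 1) j)
    (fun k j => traceK_rec A Q s c hA hQ hQA hQQ (2 * k + 1) j)
    (fun k => by
      have h := trace_hashimoto_pow_rec (G := G) (2 * k + 1)
      rw [hQ] at h
      simpa [mul_add, add_assoc] using h)
    (hcyc0 0 (by omega)) (hcyc0 1 (by omega)) (hcyc0 2 (by omega))
  have h14 := trace_fromBlocks_pow H 6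
  rw [← hAdef] at h14
  simp only [hcyc _ (show 6 ≤ 6 by omega), hcyc _ (show 5 ≤ 6 by omega),
    hcyc _ (show 4 ≤ 6 by omega), hcyc _ (show 3 ≤ 6 by omega)] at key
  have key' : 2 * ((H * Hᵀ) ^ 7).trace = (cycleCount G (2 * 7) : ℝ)
      + 7 * s * cycleCount G (2 * 6) + 7 * (3 * s ^ 2 + c) * cycleCount G (2 * 5)
      + 7 * s * (5 * s ^ 2 + 6 * c) * cycleCount G (2 * 4)
      + 2 * (t * (q1 + 1) * (q2 + 1)) * A14 := h14.symm.trans key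
  simp only [numCycles]
  push_cast
  rw [htn]
  clear_value A14 s c
  linear_combination -key' / 28
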